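/- Let l ≥ 1 and let P = {P_0,…,P_{l−1}} be a partition of ω into infinite sets with min P_i < min P_j whenever i < j. Let E ∈ 𝓔^P_∞, let n < ω, set a = r_n(E), and let 𝓞 be any set of approximations of length n+1 (restrictions r_{n+1}(G) of members G of 𝓔^P_∞). Then there exists F ∈ [a,E] such that either r_{n+1}(G) ∈ 𝓞 for every G ∈ [a,F], or r_{n+1}(G) ∉ 𝓞 for every G ∈ [a,F]. -/

import Mathlib

open Set

namespace DualRamsey

/-- `F` is a coarsening of `E` (written `F ≤ E` in the paper): every class of `F`
is a union of classes of `E`. -/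
def Coarsens {X : Type*} (F E : Setoid X) : Prop := ∀ a b, E.r a b → F.r a b

/-- The set of equivalence classes of a setoid. -/
def classes {X : Type*} (E : Setoid X) : Set (Set X) := {C | ∃ x, C = {y | E.r x y}}

/-- The set of minimal representatives of the classes of an equivalence relation on ℕ. -/
def minReps (E : Setoid ℕ) : Set ℕ := {n | ∀ m, E.r n m → n ≤ m}

/-- `pRep E k` is `p_k(E)`, the k-th minimal representative in increasing order. -/
noncomputable def pRep (E : Setoid ℕ) (k : ℕ) : ℕ := Nat.nth (· ∈ minReps E) k

/-- `approx n E` is the n-th approximation `r_n(E)`: `E` restricted to `{0,…,p_n(E)-1}`,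
identified with its graph. -/
noncomputable def approx (n : ℕ) (E : Setoid ℕ) : Set (ℕ × ℕ) :=
  {q | q.1 < pRep E n ∧ q.2 < pRep E n ∧ E.r q.1 q.2}

/-- Basic set `[a, E]` relative to a space `S` of equivalence relations. -/
noncomputable def basicSet (S : Set (Setoid ℕ)) (a : Set (ℕ × ℕ)) (E : ↥S) : Set ↥S :=
  {F | Coarsens F.1 E.1 ∧ ∃ n, approx n F.1 = a}

/-- The Ellentuck topology on a space `S` of equivalence relations. -/
noncomputable def ellentuckTop (S : Set (Setoid ℕ)) : TopologicalSpace ↥S :=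
  TopologicalSpace.generateFrom {U | ∃ a E, U = basicSet S a E}

def IsRamsey (S : Set (Setoid ℕ)) (X : Set ↥S) : Prop :=
  ∀ (a : Set (ℕ × ℕ)) (B : ↥S), (basicSet S a B).Nonempty →
    ∃ A ∈ basicSet S a B, basicSet S a A ⊆ X ∨ basicSet S a A ∩ X = ∅

def IsRamseyNull (S : Set (Setoid ℕ)) (X : Set ↥S) : Prop :=
  ∀ (a : Set (ℕ × ℕ)) (B : ↥S), (basicSet S a B).Nonempty →
    ∃ A ∈ basicSet S a B, basicSet S a A ∩ X = ∅

/-- The property of Baire with respect to the Ellentuck topology. -/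
noncomputable def HasBP (S : Set (Setoid ℕ)) (X : Set ↥S) : Prop :=
  ∃ O M : Set ↥S, (ellentuckTop S).IsOpen O ∧ @IsMeagre _ (ellentuckTop S) M ∧
    X = (O \ M) ∪ (M \ O)

/-- The Souslin operation applied to a scheme indexed by finite sequences of naturals. -/
def souslinOp {X : Type*} (A : List ℕ → Set X) : Set X :=
  ⋃ x : ℕ → ℕ, ⋂ n : ℕ, A ((List.range n).map x)

/-- `Y` belongs to the smallest field of sets containing all `t`-open sets and
closed under the Souslin operation. -/
def SouslinMeasurable {X : Type*} (t : TopologicalSpace X) (Y : Set X) : Prop :=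
  ∀ 𝒜 : Set (Set X),
    (∀ U, t.IsOpen U → U ∈ 𝒜) →
    (∀ A ∈ 𝒜, Aᶜ ∈ 𝒜) →
    (∀ A ∈ 𝒜, ∀ B ∈ 𝒜, A ∪ B ∈ 𝒜) →
    (∀ f : List ℕ → Set X, (∀ s, f s ∈ 𝒜) → souslinOp f ∈ 𝒜) →
    Y ∈ 𝒜

/-- The graph of an equivalence relation as a boolean-valued function. -/
noncomputable def graphMap {X : Type*} (E : Setoid X) : X × X → Bool :=
  fun q => @decide (E.r q.1 q.2) (Classical.dec _)

/-- The metrizable topology on a space of equivalence relations, as a subspace of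
`2^(X × X)` via graphs. -/
noncomputable def graphTop {X : Type*} (S : Set (Setoid X)) : TopologicalSpace ↥S :=
  TopologicalSpace.induced (fun E => graphMap E.1) inferInstance



/-- `𝓔^P_∞` for a partition `P` of ℕ into `l` infinite pieces: the `P`-alternating
equivalence relations, i.e. those with infinitely many classes whose k-th minimal
representative lies in `P (k mod l)`. -/
noncomputable def EPalt (l : ℕ) (hl : 0 < l) (P : Fin l → Set ℕ) : Set (Setoid ℕ) :=
  {E | (classes E).Infinite ∧ ∀ k : ℕ, pRep E k ∈ P ⟨k % l, Nat.mod_lt k hl⟩}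

/-!
Colour the finite words over a finite alphabet. An idempotent in a minimal closed left ideal of the
semigroup of ultrafilters on words is a right identity of that ideal. Hence an idempotent
ultrafilter `e` on the words beginning with a variable, all of whose substitution images `σ_a(e)`
lie in the ideal, satisfies `σ_a(e) * σ_b(e) = σ_a(e)` for all letters `a` and `b`. Concatenating
words chosen along `e` gives the Carlson–Simpson theorem for left-variable words: there is an
infinite variable word all of whose instances, cut off just before the first occurrence of any
variable, have one colour.

For the pigeonhole, leave the first `n + 1` classes of `E` alone and group the later ones into
blocks of `l` consecutive classes, so that each block alternates through `P`. A word over the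
alphabet `Fin l → Fin (n + 1)` tells how to merge a block into the first `n + 1` classes. The
variable word found above defines the coarsening `F`: blocks carrying letters are merged into the
first classes, blocks carrying the same variable are merged with one another. If `G ∈ [a, F]`, then
its next minimal representative `p_{n+1}(G)` lies in `P ((n + 1) mod l)`, hence is the first one of
a block starting a variable of `F`, and everything before it is merged into the first `n + 1`
classes, so that `r_{n+1}(G)` is coded by one of the instances of the variable word.
-/

section UltrafilterSemigroup

open Filter

attribute [local instance] Ultrafilter.mul Ultrafilter.semigroup

theorem continuous_ultrafilter_map {α β : Type*} (f : α → β) :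
    Continuous (Ultrafilter.map f) :=
  ultrafilterBasis_is_basis.continuous_iff.2 <| forall_mem_range.2 fun s ↦
    ultrafilter_isOpen_basic (f ⁻¹' s)

theorem ultrafilter_map_mul {M N : Type*} [Mul M] [Mul N] (f : M →ₙ* N) (u v : Ultrafilter M) :
    (u * v).map f = u.map f * v.map f :=
  Ultrafilter.coe_inj.mp <| Filter.ext' fun p ↦ by
    simp only [Ultrafilter.eventually_mul, Ultrafilter.coe_map, eventually_map, map_mul]

theorem exists_isClosed_leftIdeal_forall_exists_mul_eq {M : Type*} [Nonempty M] [Semigroup M]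
    [TopologicalSpace M] [CompactSpace M] [T2Space M] (hcont : ∀ p : M, Continuous (· * p)) :
    ∃ I : Set M, IsClosed I ∧ I.Nonempty ∧ (∀ u, ∀ m ∈ I, u * m ∈ I) ∧
      ∀ p ∈ I, ∀ m ∈ I, ∃ u, u * p = m := by
  let ideals : Set (Set M) := {I | IsClosed I ∧ I.Nonempty ∧ ∀ u, ∀ m ∈ I, u * m ∈ I}
  obtain ⟨I, -, hmin⟩ : ∃ I ⊆ univ, Minimal (· ∈ ideals) I := by
    refine zorn_superset_nonempty ideals (fun c hc hchain hne ↦ ?_) univ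
      ⟨isClosed_univ, univ_nonempty, fun _ _ _ ↦ mem_univ _⟩
    have : Nonempty c := hne.to_subtype
    refine ⟨⋂₀ c, ⟨isClosed_sInter fun I hI ↦ (hc hI).1, ?_, fun u m hm I hI ↦
      (hc hI).2.2 u m (hm I hI)⟩, fun I ↦ sInter_subset_of_mem⟩
    have hdir : DirectedOn (· ⊇ ·) c := fun I hI J hJ ↦ (hchain.total hI hJ).elim
      (fun h ↦ ⟨I, hI, subset_rfl, h⟩) fun h ↦ ⟨J, hJ, h, subset_rfl⟩
    exact IsCompact.nonempty_sInter_of_directed_nonempty_isCompact_isClosed hdir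
      (fun I hI ↦ (hc hI).2.1) (fun I hI ↦ (hc hI).1.isCompact) fun I hI ↦ (hc hI).1
  obtain ⟨hclosed, hne, hmul⟩ := hmin.prop
  refine ⟨I, hclosed, hne, hmul, fun p hp m hm ↦ ?_⟩
  have hrange : range (· * p) = I := by
    refine hmin.eq_of_subset ⟨(isCompact_range (hcont p)).isClosed, range_nonempty _, ?_⟩
      (range_subset_iff.2 fun u ↦ hmul u p hp)
    rintro u _ ⟨v, rfl⟩
    exact ⟨u * v, mul_assoc u v p⟩
  exact hrange.symm.subset hm

theorem exists_ultrafilter_forall_map_mul_map {ι W M : Type*} [Semigroup W] [Semigroup M]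
    [Nonempty M] (σ : ι → W →ₙ* M) (j : M → W) (hσj : ∀ a x, σ a (j x) = x)
    {V : Set W} (hne : V.Nonempty) (hV : ∀ v ∈ V, ∀ t, v * t ∈ V) :
    ∃ e : Ultrafilter W, V ∈ e ∧ ∀ a b, e.map (σ a) * e.map (σ b) = e.map (σ a) := by
  obtain ⟨I, hclosed, ⟨p, hp⟩, hmul, hprincipal⟩ :=
    exists_isClosed_leftIdeal_forall_exists_mul_eq (M := Ultrafilter M)
      Ultrafilter.continuous_mul_left
  have hVmul (u v : Ultrafilter W) (hu : V ∈ u) : V ∈ u * v :=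
    (Ultrafilter.eventually_mul u v (· ∈ V)).2 <|
      Eventually.mono hu fun x hx ↦ Eventually.of_forall (hV x hx)
  let T : Set (Ultrafilter W) := {u | V ∈ u} ∩ ⋂ a, {u | u.map (σ a) ∈ I}
  have hT {u : Ultrafilter W} : u ∈ T ↔ V ∈ u ∧ ∀ a, u.map (σ a) ∈ I :=
    and_congr_right' mem_iInter
  have hTclosed : IsClosed T := (ultrafilter_isClosed_basic V).inter <|
    isClosed_iInter fun a ↦ hclosed.preimage (continuous_ultrafilter_map (σ a))
  have hTne : T.Nonempty := by
    obtain ⟨v, hv⟩ := hne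
    refine ⟨pure v * p.map j, hT.2 ⟨hVmul _ _ (mem_pure.2 hv), fun a ↦ ?_⟩⟩
    have hsection : (σ a) ∘ j = id := funext (hσj a)
    rw [ultrafilter_map_mul, Ultrafilter.map_map, hsection, Ultrafilter.map_id]
    exact hmul _ p hp
  have hTmul : ∀ u ∈ T, ∀ v ∈ T, u * v ∈ T := fun u hu v hv ↦
    hT.2 ⟨hVmul u v (hT.1 hu).1, fun a ↦ ultrafilter_map_mul (σ a) u v ▸ hmul _ _ ((hT.1 hv).2 a)⟩
  obtain ⟨e, he, hidem⟩ := exists_idempotent_in_compact_subsemigroup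
    Ultrafilter.continuous_mul_left T hTne hTclosed.isCompact hTmul
  refine ⟨e, (hT.1 he).1, fun a b ↦ ?_⟩
  obtain ⟨u, hu⟩ := hprincipal _ ((hT.1 he).2 b) _ ((hT.1 he).2 a)
  rw [← hu, mul_assoc, ← ultrafilter_map_mul, hidem]

theorem exists_subset_forall_eventually_mul_mem {ι W M : Type*} [Finite ι] [Semigroup M]
    {σ : ι → W → M} {e : Ultrafilter W} (he : ∀ a b, e.map (σ a) * e.map (σ b) = e.map (σ a))
    {a₀ : ι} {C : Set M} (hC : C ∈ e.map (σ a₀)) :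
    ∃ D ⊆ C, D.Nonempty ∧ ∀ w ∈ D, ∀ᶠ v in e, ∀ a, w * σ a v ∈ D := by
  have hsplit {a : ι} (b : ι) {p : M → Prop} (hp : ∀ᶠ v in e, p (σ a v)) :
      ∀ᶠ v in e, ∀ᶠ v' in e, p (σ a v * σ b v') := by
    have : ∀ᶠ x in e.map (σ a), p x := hp
    rwa [← he a b, Ultrafilter.eventually_mul] at this
  refine ⟨{w ∈ C | ∀ a, ∀ᶠ v in e, w * σ a v ∈ C}, sep_subset _ _, ?_, ?_⟩
  · have hgood : ∀ᶠ v in e, σ a₀ v ∈ C ∧ ∀ b, ∀ᶠ v' in e, σ a₀ v * σ b v' ∈ C :=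
      Eventually.and hC (eventually_all.2 fun b ↦ hsplit b hC)
    obtain ⟨v, hv⟩ := hgood.exists
    exact ⟨_, hv⟩
  · rintro w ⟨-, hw⟩
    refine eventually_all.2 fun a ↦ ?_
    filter_upwards [hw a, eventually_all.2 fun b ↦ hsplit b (p := (w * · ∈ C)) (hw a)]
      with v hv hv'
    exact ⟨hv, fun b ↦ (hv' b).mono fun v' h ↦ (mul_assoc w _ _).symm ▸ h⟩

theorem exists_monochromatic_forall_exists_append_mem {B : Type*} [Finite B] [Nonempty B]
    (C : Set (List B)) :
    ∃ D : Set (List B), D.Nonempty ∧ (D ⊆ C ∨ D ⊆ Cᶜ) ∧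
      ∀ m : ℕ, ∃ v : List (Option B), ∀ w ∈ D, w.length = m → ∀ a : B,
        w ++ (none :: v).map (Option.getD · a) ∈ D := by
  let σ (a : B) : FreeMonoid (Option B) →ₙ* FreeMonoid B :=
    (FreeMonoid.map (Option.getD · a)).toMulHom
  obtain ⟨e, hVe, he⟩ := exists_ultrafilter_forall_map_mul_map σ (FreeMonoid.map some)
    (fun a x ↦ (FreeMonoid.map_map ..).trans (congrArg (· x) FreeMonoid.map_id))
    (V := range (FreeMonoid.of none * ·)) (range_nonempty _)
    (forall_mem_range.2 fun t t' ↦ ⟨t * t', (mul_assoc ..).symm⟩)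
  obtain ⟨a₀⟩ := ‹Nonempty B›
  obtain ⟨D, hDne, hDC, hD⟩ : ∃ D : Set (FreeMonoid B), D.Nonempty ∧
      (D ⊆ FreeMonoid.toList ⁻¹' C ∨ D ⊆ (FreeMonoid.toList ⁻¹' C)ᶜ) ∧
      ∀ w ∈ D, ∀ᶠ v in e, ∀ a, w * σ a v ∈ D := by
    rcases Ultrafilter.mem_or_compl_mem (e.map (σ a₀)) (FreeMonoid.toList ⁻¹' C) with hC | hC
    · obtain ⟨D, hDC, hDne, hD⟩ := exists_subset_forall_eventually_mul_mem he hC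
      exact ⟨D, hDne, Or.inl hDC, hD⟩
    · obtain ⟨D, hDC, hDne, hD⟩ := exists_subset_forall_eventually_mul_mem he hC
      exact ⟨D, hDne, Or.inr hDC, hD⟩
  refine ⟨FreeMonoid.ofList ⁻¹' D, hDne, hDC, fun m ↦ ?_⟩
  have hfin : {w : List B | w.length = m}.Finite := List.finite_length_eq B m
  have hext : ∀ᶠ v in e, ∀ w ∈ {w : List B | w.length = m}, FreeMonoid.ofList w ∈ D →
      ∀ a, FreeMonoid.ofList w * σ a v ∈ D :=
    (eventually_all_finite hfin).2 fun w _ ↦ eventually_imp_distrib_left.2 (hD _)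
  obtain ⟨_, hv, ⟨t, rfl⟩⟩ := (hext.and hVe).exists
  exact ⟨t.toList, fun w hw hlen ↦ hv w hlen hw⟩

end UltrafilterSemigroup

section CarlsonSimpson

theorem exists_forall_getElem?_eq {α : Type*} {W : ℕ → List α}
    (hprefix : ∀ k, W k <+: W (k + 1)) (hlen : StrictMono fun k ↦ (W k).length) :
    ∃ L : ℕ → α, ∀ k q, q < (W k).length → (W k)[q]? = some (L q) := by
  have hmono {i j : ℕ} (hij : i ≤ j) : W i <+: W j :=
    Nat.le_induction List.prefix_rfl (fun k _ ih ↦ ih.trans (hprefix k)) j hij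
  have hlt (q : ℕ) : q < (W (q + 1)).length := hlen.id_le (q + 1)
  refine ⟨fun q ↦ (W (q + 1))[q]'(hlt q), fun k q hq ↦ ?_⟩
  rw [List.getElem?_eq_getElem hq, Option.some_inj]
  rcases le_total k (q + 1) with hk | hk
  · exact (hmono hk).getElem hq
  · exact ((hmono hk).getElem (hlt q)).symm

variable {B : Type*}

/-- An infinite variable word over the alphabet `B`: letters of `B` are tagged `Sum.inl`, and each
variable is named by the position of its first occurrence, so that `Sum.inr m` can only occur at
positions `q ≥ m`. The sequence `s` enumerates these first occurrences. -/
structure IsVariableWord (s : ℕ → ℕ) (L : ℕ → B ⊕ ℕ) : Prop where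
  strictMono : StrictMono s
  apply_start : ∀ t, L (s t) = Sum.inr (s t)
  le_of_eq_inr : ∀ {q m}, L q = Sum.inr m → m ≤ q
  mem_range_of_eq_inr : ∀ {q m}, L q = Sum.inr m → m ∈ range s

/-- `x` arises from the variable word `L` by substituting letters for its variables. As a variable
is named by a position at which it occurs, the letter substituted for `Sum.inr m` is `x m`. -/
def IsInstance (L : ℕ → B ⊕ ℕ) (x : ℕ → B) : Prop := ∀ q, Sum.elim id x (L q) = x q

/-- Appends to `W` the letters of `none :: v`, with `none` read as a new variable. -/
def appendVariable (W : List (B ⊕ ℕ)) (v : List (Option B)) : List (B ⊕ ℕ) :=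
  W ++ (none :: v).map (Option.elim · (Sum.inr W.length) Sum.inl)

theorem map_appendVariable (W : List (B ⊕ ℕ)) (v : List (Option B)) (x : ℕ → B) :
    (appendVariable W v).map (Sum.elim id x) =
      W.map (Sum.elim id x) ++ (none :: v).map (Option.getD · (x W.length)) := by
  rw [appendVariable, List.map_append, List.map_map]
  congr 1
  refine List.map_congr_left fun o _ ↦ ?_
  cases o <;> rfl

theorem isVariableWord_of_appendVariable {W : ℕ → List (B ⊕ ℕ)} {v : ℕ → List (Option B)}
    {L : ℕ → B ⊕ ℕ} (hstart : ∀ m, Sum.inr m ∉ W 0)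
    (hstep : ∀ k, W (k + 1) = appendVariable (W k) (v k))
    (hlen : StrictMono fun k ↦ (W k).length)
    (hL : ∀ k q, q < (W k).length → (W k)[q]? = some (L q)) :
    IsVariableWord (fun k ↦ (W k).length) L := by
  have hvar : ∀ k q m, (W k)[q]? = some (Sum.inr m) → m ≤ q ∧ ∃ t, (W t).length = m := by
    intro k
    induction k with
    | zero => exact fun q m h ↦ absurd (List.mem_of_getElem? h) (hstart m)
    | succ k ih =>
      intro q m h
      rw [hstep, appendVariable, List.getElem?_append] at h
      split_ifs at h with hq
      · exact ih q m h
      · obtain ⟨o, -, ho⟩ := List.mem_map.1 (List.mem_of_getElem? h)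
        cases o with
        | none => exact ⟨Sum.inr_injective ho ▸ not_lt.1 hq, k, Sum.inr_injective ho⟩
        | some b => cases ho
  have hvar' {q m : ℕ} (h : L q = Sum.inr m) : m ≤ q ∧ ∃ t, (W t).length = m :=
    hvar (q + 1) q m (h ▸ hL (q + 1) q (hlen.id_le (q + 1)))
  refine ⟨hlen, fun t ↦ ?_, fun h ↦ (hvar' h).1, fun h ↦ (hvar' h).2⟩
  have hlast := hL (t + 1) (W t).length (hlen t.lt_succ_self)
  rw [hstep, appendVariable, List.getElem?_append_right le_rfl, Nat.sub_self] at hlast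
  exact (Option.some_inj.1 hlast).symm

theorem carlson_simpson [Finite B] [Nonempty B] (C : Set (List B)) :
    ∃ (s : ℕ → ℕ) (L : ℕ → B ⊕ ℕ), IsVariableWord s L ∧
      ((∀ x, IsInstance L x → ∀ i, (List.range (s i)).map x ∈ C) ∨
        ∀ x, IsInstance L x → ∀ i, (List.range (s i)).map x ∉ C) := by
  obtain ⟨D, ⟨w₀, hw₀⟩, hDC, hD⟩ := exists_monochromatic_forall_exists_append_mem C
  choose v hv using hD
  let W (k : ℕ) : List (B ⊕ ℕ) :=
    (fun W ↦ appendVariable W (v W.length))^[k] (w₀.map Sum.inl)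
  have hstep (k : ℕ) : W (k + 1) = appendVariable (W k) (v (W k).length) :=
    Function.iterate_succ_apply' ..
  have hlen : StrictMono fun k ↦ (W k).length :=
    strictMono_nat_of_lt_succ fun k ↦ by simp [hstep, appendVariable]
  obtain ⟨L, hL⟩ := exists_forall_getElem?_eq
    (fun k ↦ hstep k ▸ List.prefix_append ..) hlen
  have hWD (x : ℕ → B) (k : ℕ) : (W k).map (Sum.elim id x) ∈ D := by
    induction k with
    | zero => simpa [W] using hw₀
    | succ k ih =>
      rw [hstep, map_appendVariable]
      exact hv _ _ ih (List.length_map _) _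
  have hmap (x : ℕ → B) (hx : IsInstance L x) (k : ℕ) :
      (List.range (W k).length).map x = (W k).map (Sum.elim id x) := by
    refine List.ext_getElem? fun q ↦ ?_
    by_cases hq : q < (W k).length
    · rw [List.getElem?_map, List.getElem?_map, List.getElem?_range hq, hL k q hq]
      exact congrArg some (hx q).symm
    · simp [hq]
  refine ⟨_, L, isVariableWord_of_appendVariable (by simp [W]) hstep hlen hL, ?_⟩
  exact hDC.imp (fun h x hx k ↦ h (hmap x hx k ▸ hWD x k))
    fun h x hx k ↦ h (hmap x hx k ▸ hWD x k)

end CarlsonSimpson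

section ClassIndex

theorem nth_eq_nth_of_forall_lt_iff {p q : ℕ → Prop} (hq : {c | q c}.Infinite) {n : ℕ}
    (hn : p (Nat.nth q n)) (hpq : ∀ c < Nat.nth q n, (p c ↔ q c)) {k : ℕ} (hk : k ≤ n) :
    Nat.nth p k = Nat.nth q k := by
  classical
  have hkn : Nat.nth q k ≤ Nat.nth q n := Nat.nth_monotone hq hk
  have hpk : p (Nat.nth q k) := hkn.lt_or_eq.elim
    (fun h ↦ (hpq _ h).2 (Nat.nth_mem_of_infinite hq k)) (fun h ↦ h ▸ hn)
  have hcount : Nat.count p (Nat.nth q k) = k := calc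
    Nat.count p (Nat.nth q k) = Nat.count q (Nat.nth q k) :=
      (Nat.count_mono_left fun c hc ↦ (hpq c (hc.trans_le hkn)).1).antisymm
        (Nat.count_mono_left fun c hc ↦ (hpq c (hc.trans_le hkn)).2)
    _ = k := Nat.count_nth_of_infinite hq k
  calc Nat.nth p k = Nat.nth p (Nat.count p (Nat.nth q k)) := by rw [hcount]
    _ = Nat.nth q k := Nat.nth_count hpk

theorem rel_sInf_class (E : Setoid ℕ) (c : ℕ) : E.r c (sInf {d | E.r c d}) :=
  Nat.sInf_mem (⟨c, E.refl c⟩ : {d | E.r c d}.Nonempty)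

theorem sInf_class_mem_minReps (E : Setoid ℕ) (c : ℕ) : sInf {d | E.r c d} ∈ minReps E :=
  fun _ hd ↦ Nat.sInf_le (E.trans (rel_sInf_class E c) hd)

theorem sInf_class_eq_iff {E : Setoid ℕ} {c d : ℕ} :
    sInf {x | E.r c x} = sInf {x | E.r d x} ↔ E.r c d := by
  refine ⟨fun h ↦ E.trans (h ▸ rel_sInf_class E c) (E.symm (rel_sInf_class E d)), fun h ↦ ?_⟩
  have hclass : {x | E.r c x} = {x | E.r d x} :=
    Set.ext fun x ↦ ⟨E.trans (E.symm h), E.trans h⟩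
  rw [hclass]

open scoped Classical in
/-- The position of the class of `c` in the enumeration of the classes of `E` by increasing minimal
representatives: the class of `c` has minimal representative `pRep E (classIndex E c)`. -/
noncomputable def classIndex (E : Setoid ℕ) (c : ℕ) : ℕ :=
  Nat.count (· ∈ minReps E) (sInf {d | E.r c d})

theorem pRep_classIndex (E : Setoid ℕ) (c : ℕ) :
    pRep E (classIndex E c) = sInf {d | E.r c d} := by
  classical
  exact Nat.nth_count (sInf_class_mem_minReps E c)

theorem rel_pRep_classIndex (E : Setoid ℕ) (c : ℕ) : E.r c (pRep E (classIndex E c)) :=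
  pRep_classIndex E c ▸ rel_sInf_class E c

theorem pRep_classIndex_le (E : Setoid ℕ) (c : ℕ) : pRep E (classIndex E c) ≤ c :=
  pRep_classIndex E c ▸ Nat.sInf_le (E.refl c)

variable {E F G : Setoid ℕ}

theorem classIndex_eq_iff {c d : ℕ} : classIndex E c = classIndex E d ↔ E.r c d := by
  refine ⟨fun h ↦ sInf_class_eq_iff.1 ?_, fun h ↦ ?_⟩
  · rw [← pRep_classIndex, ← pRep_classIndex, h]
  · rw [classIndex, classIndex, sInf_class_eq_iff.2 h]

theorem pRep_mem_minReps (hE : (minReps E).Infinite) (k : ℕ) : pRep E k ∈ minReps E :=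
  Nat.nth_mem_of_infinite hE k

theorem pRep_strictMono (hE : (minReps E).Infinite) : StrictMono (pRep E) :=
  Nat.nth_strictMono hE

theorem range_pRep (hE : (minReps E).Infinite) : range (pRep E) = minReps E :=
  Nat.range_nth_of_infinite hE

theorem classIndex_pRep (hE : (minReps E).Infinite) (k : ℕ) : classIndex E (pRep E k) = k :=
  (pRep_strictMono hE).injective <| (pRep_classIndex_le E _).antisymm <|
    pRep_mem_minReps hE k _ (rel_pRep_classIndex E _)

theorem minReps_infinite_iff : (minReps E).Infinite ↔ (classes E).Infinite := by
  have himage : classes E = (fun x ↦ {y | E.r x y}) '' minReps E := by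
    refine Subset.antisymm ?_ ?_
    · rintro _ ⟨x, rfl⟩
      have hx := rel_sInf_class E x
      exact ⟨_, sInf_class_mem_minReps E x, Set.ext fun y ↦ ⟨E.trans hx, E.trans (E.symm hx)⟩⟩
    · rintro _ ⟨x, -, rfl⟩
      exact ⟨x, rfl⟩
  rw [himage, Set.infinite_image_iff]
  intro x hx y hy hxy
  have hrel : E.r x y := hxy.symm.subset (E.refl y)
  exact (hx y hrel).antisymm (hy x (E.symm hrel))

theorem minReps_subset_of_coarsens (h : Coarsens F E) : minReps F ⊆ minReps E :=
  fun _ hc d hd ↦ hc d (h _ d hd)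

theorem classIndex_pRep_classIndex_of_coarsens (h : Coarsens F E) (c : ℕ) :
    classIndex F (pRep E (classIndex E c)) = classIndex F c :=
  classIndex_eq_iff.2 <| F.symm <| h _ _ <| rel_pRep_classIndex E c

theorem pRep_eq_of_approx_eq (hG : (minReps G).Infinite) (hE : (minReps E).Infinite) {m n : ℕ}
    (h : approx m G = approx n E) {k : ℕ} (hk : k ≤ n) : pRep G k = pRep E k := by
  have hlt (c : ℕ) : c < pRep G m ↔ c < pRep E n :=
    ⟨fun hc ↦ (h.subset (⟨hc, hc, G.refl c⟩ : (c, c) ∈ approx m G)).1,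
      fun hc ↦ (h.superset (⟨hc, hc, E.refl c⟩ : (c, c) ∈ approx n E)).1⟩
  have hbound : pRep G m = pRep E n :=
    le_antisymm (not_lt.1 fun hc ↦ lt_irrefl _ ((hlt _).1 hc))
      (not_lt.1 fun hc ↦ lt_irrefl _ ((hlt _).2 hc))
  have hrel {c d : ℕ} (hc : c < pRep E n) (hd : d < pRep E n) : G.r c d ↔ E.r c d :=
    ⟨fun hcd ↦ (h.subset (⟨(hlt c).2 hc, (hlt d).2 hd, hcd⟩ : (c, d) ∈ approx m G)).2.2,
      fun hcd ↦ (h.superset (⟨hc, hd, hcd⟩ : (c, d) ∈ approx n E)).2.2⟩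
  refine nth_eq_nth_of_forall_lt_iff hE (n := n)
    (hbound ▸ pRep_mem_minReps hG m : pRep E n ∈ minReps G) (fun c hc ↦ ?_) hk
  refine ⟨fun hmin d hd ↦ le_of_not_gt fun hdc ↦ ?_, fun hmin d hd ↦ le_of_not_gt fun hdc ↦ ?_⟩
  · exact hdc.not_ge (hmin d ((hrel hc (hdc.trans hc)).2 hd))
  · exact hdc.not_ge (hmin d ((hrel hc (hdc.trans hc)).1 hd))

end ClassIndex

section Merge

/-- `g` retracts `ℕ` onto the set enumerated increasingly by `φ` and never increases its argument.
Read as a map sending the index of a class to the index of the class it is merged into, such a `g`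
keeps the minimal representatives of the classes listed by `φ`. -/
structure IsRegressiveRetraction (g φ : ℕ → ℕ) : Prop where
  strictMono : StrictMono φ
  apply_le : ∀ k, g k ≤ k
  apply_enum : ∀ j, g (φ j) = φ j
  mem_range : ∀ k, g k ∈ range φ

/-- The coarsening of `E` obtained by merging the classes of `E` whose indices have the same image
under `g`. -/
noncomputable def merge (E : Setoid ℕ) (g : ℕ → ℕ) : Setoid ℕ := Setoid.ker (g ∘ classIndex E)

variable {E G : Setoid ℕ} {g φ : ℕ → ℕ}

theorem merge_coarsens (E : Setoid ℕ) (g : ℕ → ℕ) : Coarsens (merge E g) E :=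
  fun _ _ h ↦ congrArg g (classIndex_eq_iff.2 h)

theorem minReps_merge (hg : IsRegressiveRetraction g φ) (hE : (minReps E).Infinite) :
    minReps (merge E g) = range (pRep E ∘ φ) := by
  refine Subset.antisymm (fun c hc ↦ ?_) ?_
  · obtain ⟨j, hj⟩ := hg.mem_range (classIndex E c)
    have hrel : g (classIndex E c) = g (classIndex E (pRep E (φ j))) := by
      rw [classIndex_pRep hE, hg.apply_enum, hj]
    have hle : pRep E (φ j) ≤ c := calc
      pRep E (φ j) ≤ pRep E (classIndex E c) :=
        (pRep_strictMono hE).monotone (hj ▸ hg.apply_le _)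
      _ ≤ c := pRep_classIndex_le E c
    exact ⟨j, hle.antisymm (hc _ hrel)⟩
  · rintro _ ⟨j, rfl⟩ d (hd : g (classIndex E (pRep E (φ j))) = g (classIndex E d))
    rw [classIndex_pRep hE, hg.apply_enum] at hd
    calc pRep E (φ j) ≤ pRep E (classIndex E d) :=
          (pRep_strictMono hE).monotone (hd ▸ hg.apply_le _)
      _ ≤ d := pRep_classIndex_le E d

theorem minReps_merge_infinite (hg : IsRegressiveRetraction g φ) (hE : (minReps E).Infinite) :
    (minReps (merge E g)).Infinite :=
  minReps_merge hg hE ▸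
    Set.infinite_range_of_injective ((pRep_strictMono hE).comp hg.strictMono).injective

theorem pRep_merge (hg : IsRegressiveRetraction g φ) (hE : (minReps E).Infinite) :
    pRep (merge E g) = pRep E ∘ φ := by
  have hF := minReps_merge_infinite hg hE
  refine (StrictMono.range_inj (pRep_strictMono hF)
    ((pRep_strictMono hE).comp hg.strictMono)).1 ?_
  rw [range_pRep hF, minReps_merge hg hE]

theorem approx_merge (hg : IsRegressiveRetraction g φ) (hE : (minReps E).Infinite) {n : ℕ}
    (hgn : ∀ k < n, g k = k) (hφn : φ n = n) : approx n (merge E g) = approx n E := by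
  have hindex {c : ℕ} (hc : c < pRep E n) : g (classIndex E c) = classIndex E c :=
    hgn _ ((pRep_strictMono hE).lt_iff_lt.1 ((pRep_classIndex_le E c).trans_lt hc))
  ext ⟨c, d⟩
  simp only [approx, pRep_merge hg hE, Function.comp_apply, hφn, mem_ofPred_eq]
  refine and_congr_right fun hc ↦ and_congr_right fun hd ↦ ?_
  rw [← classIndex_eq_iff (E := E), ← hindex hc, ← hindex hd]
  rfl

theorem classIndex_pRep_of_coarsens_merge (hE : (minReps E).Infinite)
    (hG : Coarsens G (merge E g)) {k k' : ℕ} (h : g k = g k') :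
    classIndex G (pRep E k) = classIndex G (pRep E k') := by
  refine classIndex_eq_iff.2 (hG _ _ ?_)
  change g _ = g _
  rwa [classIndex_pRep hE, classIndex_pRep hE]

end Merge

section BlockCoding

variable {l n : ℕ}

/-- The indices beyond `n` are cut into consecutive blocks of length `l`; this is the `r`-th index
of the `q`-th block. -/
def blockPos (n q : ℕ) (r : Fin l) : ℕ := n + 1 + (l * q + r)

/-- The map that fixes the indices up to `n` and is given by `f` on the blocks beyond `n`. -/
def blockExtend [NeZero l] (n : ℕ) (f : ℕ → Fin l → ℕ) (k : ℕ) : ℕ :=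
  if k ≤ n then k else f ((k - (n + 1)) / l) (Fin.ofNat l (k - (n + 1)))

theorem lt_blockPos (n q : ℕ) (r : Fin l) : n < blockPos n q r := by
  unfold blockPos
  lia

theorem blockPos_lt_blockPos_iff {q q' : ℕ} {r r' : Fin l} :
    blockPos n q r < blockPos n q' r' ↔ q < q' ∨ q = q' ∧ r < r' := by
  have hblock {q q' : ℕ} (r r' : Fin l) (h : q < q') : blockPos n q r < blockPos n q' r' := by
    have : l * (q + 1) ≤ l * q' := Nat.mul_le_mul_left l h
    unfold blockPos
    lia
  rcases lt_trichotomy q q' with h | rfl | h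
  · simp only [hblock r r' h, h, true_or]
  · simp only [blockPos, lt_irrefl, true_and, false_or, Fin.lt_def]
    lia
  · simp only [(hblock r' r h).not_gt, h.not_gt, h.ne', false_and, or_self]

theorem blockPos_mono (r : Fin l) : Monotone (blockPos n · r) :=
  fun _ _ h ↦ Nat.add_le_add_left (Nat.add_le_add_right (Nat.mul_le_mul_left l h) r) _

theorem blockPos_mod (q : ℕ) (r : Fin l) : blockPos n q r % l = (n + 1 + r) % l := by
  rw [blockPos, add_left_comm, Nat.mul_add_mod]

theorem le_or_exists_blockPos (l n k : ℕ) [NeZero l] :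
    k ≤ n ∨ ∃ q, ∃ r : Fin l, blockPos n q r = k := by
  refine (le_or_gt k n).imp_right fun h ↦
    ⟨(k - (n + 1)) / l, Fin.ofNat l (k - (n + 1)), ?_⟩
  rw [blockPos, Fin.val_ofNat, Nat.div_add_mod, Nat.add_sub_cancel' h]

variable [NeZero l]

theorem blockPos_zero (q : ℕ) : blockPos n q (0 : Fin l) = n + 1 + l * q := by
  rw [blockPos, Fin.val_zero, add_zero]

theorem blockExtend_of_le {f : ℕ → Fin l → ℕ} {k : ℕ} (h : k ≤ n) : blockExtend n f k = k :=
  if_pos h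

theorem blockExtend_blockPos (f : ℕ → Fin l → ℕ) (q : ℕ) (r : Fin l) :
    blockExtend n f (blockPos n q r) = f q r := by
  have hdiv : (l * q + r) / l = q := by
    rw [Nat.mul_add_div (NeZero.pos l), Nat.div_eq_of_lt r.isLt, add_zero]
  have hmod : Fin.ofNat l (l * q + r) = r :=
    Fin.ext <| by rw [Fin.val_ofNat, Nat.mul_add_mod, Nat.mod_eq_of_lt r.isLt]
  rw [blockExtend, if_neg (lt_blockPos n q r).not_ge, blockPos, Nat.add_sub_cancel_left, hdiv, hmod]

/-- The action on indices of the merging coded by a variable word: a block carrying a letter `β` is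
sent to the first `n + 1` indices according to `β`, and a block carrying a variable is sent to the
block where this variable first occurs. -/
def collapse (L : ℕ → (Fin l → Fin (n + 1)) ⊕ ℕ) : ℕ → ℕ :=
  blockExtend n fun q r ↦ (L q).elim (fun β ↦ β r) (fun m ↦ blockPos n m r)

/-- The increasing enumeration of the indices up to `n` together with the blocks listed by `s`. -/
def blockEnum (l n : ℕ) [NeZero l] (s : ℕ → ℕ) : ℕ → ℕ :=
  blockExtend n fun q (r : Fin l) ↦ blockPos n (s q) r

theorem blockEnum_of_le {s : ℕ → ℕ} {k : ℕ} (h : k ≤ n) : blockEnum l n s k = k :=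
  blockExtend_of_le h

theorem blockEnum_blockPos (s : ℕ → ℕ) (q : ℕ) (r : Fin l) :
    blockEnum l n s (blockPos n q r) = blockPos n (s q) r :=
  blockExtend_blockPos _ q r

theorem blockEnum_strictMono {s : ℕ → ℕ} (hs : StrictMono s) : StrictMono (blockEnum l n s) := by
  intro j j' hlt
  rcases le_or_exists_blockPos l n j with hj | ⟨q, r, rfl⟩ <;>
    rcases le_or_exists_blockPos l n j' with hj' | ⟨q', r', rfl⟩
  · rwa [blockEnum_of_le hj, blockEnum_of_le hj']
  · rw [blockEnum_of_le hj, blockEnum_blockPos]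
    exact hj.trans_lt (lt_blockPos n _ r')
  · exact absurd (hlt.trans_le hj') (lt_blockPos n q r).not_gt
  · rw [blockEnum_blockPos, blockEnum_blockPos, blockPos_lt_blockPos_iff]
    exact (blockPos_lt_blockPos_iff.1 hlt).imp (@hs _ _) (And.imp_left (congrArg s))

theorem blockEnum_mod (s : ℕ → ℕ) (k : ℕ) : blockEnum l n s k % l = k % l := by
  rcases le_or_exists_blockPos l n k with hk | ⟨q, r, rfl⟩
  · rw [blockEnum_of_le hk]
  · rw [blockEnum_blockPos, blockPos_mod, blockPos_mod]

variable {L : ℕ → (Fin l → Fin (n + 1)) ⊕ ℕ}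

theorem collapse_of_le {k : ℕ} (h : k ≤ n) : collapse L k = k := blockExtend_of_le h

theorem collapse_blockPos_of_eq_inl {q : ℕ} {β : Fin l → Fin (n + 1)} (h : L q = Sum.inl β)
    (r : Fin l) : collapse L (blockPos n q r) = β r := by
  rw [collapse, blockExtend_blockPos, h, Sum.elim_inl]

theorem collapse_blockPos_of_eq_inr {q m : ℕ} (h : L q = Sum.inr m) (r : Fin l) :
    collapse L (blockPos n q r) = blockPos n m r := by
  rw [collapse, blockExtend_blockPos, h, Sum.elim_inr]

theorem IsVariableWord.isRegressiveRetraction_collapse {s : ℕ → ℕ} (hL : IsVariableWord s L) :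
    IsRegressiveRetraction (collapse L) (blockEnum l n s) where
  strictMono := blockEnum_strictMono hL.strictMono
  apply_le k := by
    rcases le_or_exists_blockPos l n k with hk | ⟨q, r, rfl⟩
    · exact (collapse_of_le hk).le
    · rcases h : L q with β | m
      · rw [collapse_blockPos_of_eq_inl h]
        exact (Nat.lt_succ_iff.1 (β r).isLt).trans (lt_blockPos n q r).le
      · rw [collapse_blockPos_of_eq_inr h]
        exact blockPos_mono r (hL.le_of_eq_inr h)
  apply_enum j := by
    rcases le_or_exists_blockPos l n j with hj | ⟨t, r, rfl⟩
    · rw [blockEnum_of_le hj, collapse_of_le hj]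
    · rw [blockEnum_blockPos, collapse_blockPos_of_eq_inr (hL.apply_start t)]
  mem_range k := by
    rcases le_or_exists_blockPos l n k with hk | ⟨q, r, rfl⟩
    · exact ⟨k, by rw [blockEnum_of_le hk, collapse_of_le hk]⟩
    · rcases h : L q with β | m
      · rw [collapse_blockPos_of_eq_inl h]
        exact ⟨β r, blockEnum_of_le (Nat.lt_succ_iff.1 (β r).isLt)⟩
      · obtain ⟨t, rfl⟩ := hL.mem_range_of_eq_inr h
        rw [collapse_blockPos_of_eq_inr h]
        exact ⟨blockPos n t r, blockEnum_blockPos s t r⟩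

end BlockCoding

section WordApprox

variable {l n : ℕ} [NeZero l] {E G : Setoid ℕ}

/-- The map sending the indices up to `n` to themselves and the `q`-th block beyond them to the
first `n + 1` indices according to the `q`-th letter of `w`, read as `0` past the end of `w`. -/
def wordMap (w : List (Fin l → Fin (n + 1))) : ℕ → ℕ :=
  blockExtend n fun q r ↦ w.getD q 0 r

/-- The approximation of length `n + 1` coded by the word `w`: the first `n + 1` classes and the
first `w.length` blocks of classes of `E`, merged according to `w`. -/
noncomputable def wordApprox (E : Setoid ℕ) (w : List (Fin l → Fin (n + 1))) : Set (ℕ × ℕ) :=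
  {c | c.1 < pRep E (n + 1 + l * w.length) ∧ c.2 < pRep E (n + 1 + l * w.length) ∧
    wordMap w (classIndex E c.1) = wordMap w (classIndex E c.2)}

/-- The letters describing how `G` merges the blocks of classes of `E` into its first `n + 1`
classes. The `q`-th letter is meaningful only if the `q`-th block of `E` lies below
`pRep G (n + 1)`. -/
noncomputable def blockLetter (l n : ℕ) (E G : Setoid ℕ) (q : ℕ) (r : Fin l) : Fin (n + 1) :=
  Fin.ofNat (n + 1) (classIndex G (pRep E (blockPos n q r)))

theorem wordMap_blockLetter (hE : (minReps E).Infinite) (hG : (minReps G).Infinite)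
    (hGE : Coarsens G E) (hn : ∀ k ≤ n, pRep G k = pRep E k) {m : ℕ}
    (hm : pRep G (n + 1) = pRep E (n + 1 + l * m)) {c : ℕ} (hc : c < pRep G (n + 1)) :
    wordMap ((List.range m).map (blockLetter l n E G)) (classIndex E c) = classIndex G c := by
  rw [← classIndex_pRep_classIndex_of_coarsens hGE c]
  have hlt : classIndex E c < n + 1 + l * m :=
    (pRep_strictMono hE).lt_iff_lt.1 ((pRep_classIndex_le E c).trans_lt (hm ▸ hc))
  generalize classIndex E c = k at hlt
  rcases le_or_exists_blockPos l n k with hk | ⟨q, r, rfl⟩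
  · rw [wordMap, blockExtend_of_le hk, ← hn k hk, classIndex_pRep hG]
  · have hqm : q < m := by
      contrapose! hlt
      exact Nat.add_le_add_left (Nat.le_add_right_of_le (Nat.mul_le_mul_left l hlt)) _
    have hindex : classIndex G (pRep E (blockPos n q r)) < n + 1 :=
      (pRep_strictMono hG).lt_iff_lt.1 <| (pRep_classIndex_le G _).trans_lt <|
        hm ▸ pRep_strictMono hE hlt
    rw [wordMap, blockExtend_blockPos, List.getD_eq_getElem?_getD, List.getElem?_map,
      List.getElem?_range hqm]
    exact Nat.mod_eq_of_lt hindex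

theorem approx_eq_wordApprox (hE : (minReps E).Infinite) (hG : (minReps G).Infinite)
    (hGE : Coarsens G E) (hn : ∀ k ≤ n, pRep G k = pRep E k) {m : ℕ}
    (hm : pRep G (n + 1) = pRep E (n + 1 + l * m)) :
    approx (n + 1) G = wordApprox E ((List.range m).map (blockLetter l n E G)) := by
  ext ⟨c, d⟩
  simp only [approx, wordApprox, List.length_map, List.length_range, ← hm, mem_ofPred_eq]
  refine and_congr_right fun hc ↦ and_congr_right fun hd ↦ ?_
  rw [wordMap_blockLetter hE hG hGE hn hm hc, wordMap_blockLetter hE hG hGE hn hm hd,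
    classIndex_eq_iff]

theorem isInstance_blockLetter {s : ℕ → ℕ} {L : ℕ → (Fin l → Fin (n + 1)) ⊕ ℕ}
    (hL : IsVariableWord s L) (hE : (minReps E).Infinite) (hG : (minReps G).Infinite)
    (hGE : Coarsens G (merge E (collapse L))) (hn : ∀ k ≤ n, pRep G k = pRep E k) :
    IsInstance L (blockLetter l n E G) := by
  refine fun q ↦ funext fun r ↦ ?_
  rcases h : L q with β | m
  · have hβ : (β r : ℕ) ≤ n := Nat.lt_succ_iff.1 (β r).isLt
    have hindex : classIndex G (pRep E (blockPos n q r)) = β r := calc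
      _ = classIndex G (pRep E (β r)) := classIndex_pRep_of_coarsens_merge hE hGE <| by
        rw [collapse_blockPos_of_eq_inl h, collapse_of_le hβ]
      _ = β r := by rw [← hn _ hβ, classIndex_pRep hG]
    exact Fin.ext <| by
      rw [blockLetter, hindex, Fin.val_ofNat, Nat.mod_eq_of_lt (β r).isLt]; rfl
  · obtain ⟨t, rfl⟩ := hL.mem_range_of_eq_inr h
    refine congrArg (Fin.ofNat (n + 1)) (classIndex_pRep_of_coarsens_merge hE hGE ?_)
    rw [collapse_blockPos_of_eq_inr h, collapse_blockPos_of_eq_inr (hL.apply_start t)]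

end WordApprox

section EPalt

variable {l n : ℕ} {hl : 0 < l} {P : Fin l → Set ℕ} {E G : Setoid ℕ}

theorem minReps_infinite_of_mem_EPalt (hE : E ∈ EPalt l hl P) : (minReps E).Infinite :=
  minReps_infinite_iff.2 hE.1

theorem merge_mem_EPalt {g φ : ℕ → ℕ} (hg : IsRegressiveRetraction g φ)
    (hφ : ∀ j, φ j % l = j % l) (hE : E ∈ EPalt l hl P) : merge E g ∈ EPalt l hl P := by
  have hEinf := minReps_infinite_of_mem_EPalt hE
  refine ⟨minReps_infinite_iff.1 (minReps_merge_infinite hg hEinf), fun j ↦ ?_⟩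
  simpa only [pRep_merge hg hEinf, Function.comp_apply, hφ] using hE.2 (φ j)

theorem exists_pRep_succ_eq (hdisj : Pairwise (Function.onFun Disjoint P))
    (hE : E ∈ EPalt l hl P) (hG : G ∈ EPalt l hl P) (hGE : Coarsens G E)
    (hn : pRep G n = pRep E n) : ∃ i, pRep G (n + 1) = pRep E (n + 1 + l * i) := by
  have hEinf := minReps_infinite_of_mem_EPalt hE
  have hGinf := minReps_infinite_of_mem_EPalt hG
  obtain ⟨j, hj⟩ : pRep G (n + 1) ∈ range (pRep E) :=
    (range_pRep hEinf).superset (minReps_subset_of_coarsens hGE (pRep_mem_minReps hGinf _))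
  have hnj : n < j := (pRep_strictMono hEinf).lt_iff_lt.1 <| by
    rw [hj, ← hn]
    exact pRep_strictMono hGinf n.lt_succ_self
  have hmod : n + 1 ≡ j [MOD l] := by
    by_contra hne
    have hcells : (⟨(n + 1) % l, Nat.mod_lt _ hl⟩ : Fin l) ≠ ⟨j % l, Nat.mod_lt _ hl⟩ :=
      fun h ↦ hne (Fin.ext_iff.1 h)
    exact Set.disjoint_left.1 (hdisj hcells) (hG.2 (n + 1)) (hj ▸ hE.2 j)
  obtain ⟨i, hi⟩ := (Nat.modEq_iff_dvd' hnj).1 hmod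
  exact ⟨i, by rw [← hi, Nat.add_sub_cancel' hnj, hj]⟩

theorem exists_isInstance_approx_eq [NeZero l] (hdisj : Pairwise (Function.onFun Disjoint P))
    {s : ℕ → ℕ} {L : ℕ → (Fin l → Fin (n + 1)) ⊕ ℕ} (hL : IsVariableWord s L)
    (hE : E ∈ EPalt l hl P) (hG : G ∈ EPalt l hl P) (hGE : Coarsens G (merge E (collapse L)))
    {m : ℕ} (hm : approx m G = approx n E) :
    ∃ x, IsInstance L x ∧
      ∃ i, approx (n + 1) G = wordApprox E ((List.range (s i)).map x) := by
  have hEinf := minReps_infinite_of_mem_EPalt hE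
  have hGinf := minReps_infinite_of_mem_EPalt hG
  have hret := hL.isRegressiveRetraction_collapse
  have hpRep := pRep_merge hret hEinf
  have hn : ∀ k ≤ n, pRep G k = pRep E k := fun k ↦ pRep_eq_of_approx_eq hGinf hEinf hm
  have hnF : pRep G n = pRep (merge E (collapse L)) n := by
    rw [hpRep, Function.comp_apply, blockEnum_of_le le_rfl, hn n le_rfl]
  obtain ⟨i, hi⟩ := exists_pRep_succ_eq hdisj (merge_mem_EPalt hret (blockEnum_mod s) hE) hG hGE hnF
  have hlength : pRep G (n + 1) = pRep E (n + 1 + l * s i) := by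
    rw [hi, hpRep, Function.comp_apply, ← blockPos_zero, blockEnum_blockPos, blockPos_zero]
  exact ⟨_, isInstance_blockLetter hL hEinf hGinf hGE hn, i,
    approx_eq_wordApprox hEinf hGinf (fun c d h ↦ hGE c d (merge_coarsens E _ c d h)) hn hlength⟩

end EPalt

theorem EPaltPigeonhole_general {l : ℕ} (hl : 0 < l) {P : Fin l → Set ℕ}
    (hdisj : Pairwise (Function.onFun Disjoint P)) (E : ↥(EPalt l hl P)) (n : ℕ)
    (O : Set (Set (ℕ × ℕ))) :
    ∃ F ∈ basicSet (EPalt l hl P) (approx n E.1) E,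
      (∀ G ∈ basicSet (EPalt l hl P) (approx n E.1) F, approx (n + 1) G.1 ∈ O) ∨
      (∀ G ∈ basicSet (EPalt l hl P) (approx n E.1) F, approx (n + 1) G.1 ∉ O) := by
  have : NeZero l := ⟨hl.ne'⟩
  obtain ⟨s, L, hL, hcol⟩ :=
    carlson_simpson {w : List (Fin l → Fin (n + 1)) | wordApprox E.1 w ∈ O}
  have hret := hL.isRegressiveRetraction_collapse
  let F : ↥(EPalt l hl P) := ⟨merge E.1 (collapse L), merge_mem_EPalt hret (blockEnum_mod s) E.2⟩
  have happrox : approx n F.1 = approx n E.1 :=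
    approx_merge hret (minReps_infinite_of_mem_EPalt E.2) (fun k hk ↦ collapse_of_le hk.le)
      (blockEnum_of_le le_rfl)
  refine ⟨F, ⟨merge_coarsens E.1 _, n, happrox⟩, hcol.imp ?_ ?_⟩ <;>
  · rintro hword G ⟨hGF, m, hm⟩
    obtain ⟨x, hx, i, hGx⟩ := exists_isInstance_approx_eq hdisj hL E.2 G.2 hGF hm
    exact hGx ▸ hword x hx i

/-- **Pigeonhole (axiom A.4) for `𝓔^P_∞`:** given `E` in the space, `n < ω`,
`a = r_n(E)`, and a set `𝓞` of approximations of length `n+1`, there is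
`F ∈ [a,E]` such that `r_{n+1}(G) ∈ 𝓞` for all `G ∈ [a,F]`, or
`r_{n+1}(G) ∉ 𝓞` for all `G ∈ [a,F]`. -/
theorem EPaltPigeonhole
    (l : ℕ) (hl : 0 < l) (P : Fin l → Set ℕ)
    (hinf : ∀ i, (P i).Infinite)
    (hdisj : ∀ i j, i ≠ j → Disjoint (P i) (P j))
    (hcov : ⋃ i, P i = Set.univ)
    (hmin : ∀ i j : Fin l, i < j → sInf (P i) < sInf (P j))
    (E : ↥(EPalt l hl P)) (n : ℕ)
    (O : Set (Set (ℕ × ℕ)))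
    (hO : O ⊆ {b | ∃ G ∈ EPalt l hl P, b = approx (n + 1) G}) :
    ∃ F ∈ basicSet (EPalt l hl P) (approx n E.1) E,
      (∀ G ∈ basicSet (EPalt l hl P) (approx n E.1) F, approx (n + 1) G.1 ∈ O) ∨
      (∀ G ∈ basicSet (EPalt l hl P) (approx n E.1) F, approx (n + 1) G.1 ∉ O) := by
  exact EPaltPigeonhole_general hl (fun i j ↦ hdisj i j) E n O

end DualRamsey
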